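/- For all real numbers p, q, μ with 0 < p < 1, 0 < q < 1, 0 < μ < 1 and every real c > 0, there is no *-algebra isomorphism between O(S²_pq) and the Podleś sphere coordinate algebra O(S²_μc). -/

import Mathlib

noncomputable section

namespace S2comparison

/-- Free unital ℂ-algebra on the three generators `f₀, f₁, f₁*` of `O(S²_pq)`. -/
abbrev FS := FreeAlgebra ℂ (Fin 3)

/-- The generator `f₀` (self-adjoint). -/
def F0 : FS := FreeAlgebra.ι ℂ 0
/-- The generator `f₁`. -/
def F1 : FS := FreeAlgebra.ι ℂ 1
/-- The generator `f₁*`. -/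
def F1' : FS := FreeAlgebra.ι ℂ 2

/-- The defining relations of the universal `*`-algebra `O(S²_pq)` (together with their
images under the involution):
`f₁*f₁ − q·f₁f₁* = (p−q)·f₀ + (1−p)·1`, `f₀f₁ − p·f₁f₀ = (1−p)·f₁` (and its star),
`(1−f₀)(f₁f₁* − f₀) = 0` (and its star). -/
inductive RelS2 (p q : ℝ) : FS → FS → Prop
  | r1 : RelS2 p q (F1' * F1) ((q : ℂ) • (F1 * F1') + ((p - q : ℝ) : ℂ) • F0 +
      ((1 - p : ℝ) : ℂ) • 1)
  | r2 : RelS2 p q (F0 * F1) ((p : ℂ) • (F1 * F0) + ((1 - p : ℝ) : ℂ) • F1)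
  | r2star : RelS2 p q (F1' * F0) ((p : ℂ) • (F0 * F1') + ((1 - p : ℝ) : ℂ) • F1')
  | r3 : RelS2 p q ((1 - F0) * (F1 * F1' - F0)) 0
  | r3star : RelS2 p q ((F1 * F1' - F0) * (1 - F0)) 0

/-- The coordinate `*`-algebra `O(S²_pq)`. -/
abbrev OS2 (p q : ℝ) := RingQuot (RelS2 p q)

/-- `f₀ ∈ O(S²_pq)`. -/
def f0 (p q : ℝ) : OS2 p q := RingQuot.mkAlgHom ℂ (RelS2 p q) F0
/-- `f₁ ∈ O(S²_pq)`. -/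
def f1 (p q : ℝ) : OS2 p q := RingQuot.mkAlgHom ℂ (RelS2 p q) F1
/-- `f₁* ∈ O(S²_pq)`. -/
def f1' (p q : ℝ) : OS2 p q := RingQuot.mkAlgHom ℂ (RelS2 p q) F1'

/-- Free unital ℂ-algebra on the three generators `A, B, B*` of the Podleś sphere. -/
abbrev FP := FreeAlgebra ℂ (Fin 3)

/-- The generator `A` (self-adjoint). -/
def PA : FP := FreeAlgebra.ι ℂ 0
/-- The generator `B`. -/
def PB : FP := FreeAlgebra.ι ℂ 1
/-- The generator `B*`. -/
def PB' : FP := FreeAlgebra.ι ℂ 2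

/-- The defining relations of the Podleś sphere `O(S²_μc)` (with the star of the
`BA = μ²AB` relation included): `BA = μ²·AB`, `AB* = μ²·B*A`, `B*B = A − A² + c·1`,
`BB* = μ²·A − μ⁴·A² + c·1`. -/
inductive RelP (μ c : ℝ) : FP → FP → Prop
  | rba : RelP μ c (PB * PA) (((μ ^ 2 : ℝ) : ℂ) • (PA * PB))
  | rab' : RelP μ c (PA * PB') (((μ ^ 2 : ℝ) : ℂ) • (PB' * PA))
  | rb'b : RelP μ c (PB' * PB) (PA - PA * PA + ((c : ℝ) : ℂ) • 1)
  | rbb' : RelP μ c (PB * PB') (((μ ^ 2 : ℝ) : ℂ) • PA - ((μ ^ 4 : ℝ) : ℂ) • (PA * PA) +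
      ((c : ℝ) : ℂ) • 1)

/-- The coordinate `*`-algebra `O(S²_μc)` of the Podleś quantum sphere. -/
abbrev OP (μ c : ℝ) := RingQuot (RelP μ c)

/-- `A ∈ O(S²_μc)`. -/
def pa (μ c : ℝ) : OP μ c := RingQuot.mkAlgHom ℂ (RelP μ c) PA
/-- `B ∈ O(S²_μc)`. -/
def pb (μ c : ℝ) : OP μ c := RingQuot.mkAlgHom ℂ (RelP μ c) PB
/-- `B* ∈ O(S²_μc)`. -/
def pb' (μ c : ℝ) : OP μ c := RingQuot.mkAlgHom ℂ (RelP μ c) PB'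

/-!
The Podleś sphere is a domain, whereas `O(S²_pq)` has zero divisors, so not even an injective ring
homomorphism can exist.

`O(S²_pq)` glues two quantum discs along their boundary: sending `f₁` to the generator `x` of a
quantum disc, with parameter `p` or `q` respectively, extends to representations with
`f₀ ↦ xx*` and with `f₀ ↦ 1`. They show that neither factor of `(1 - f₀)(f₁f₁* - f₀) = 0` vanishes.

The Podleś sphere is the generalized Weyl algebra over `ℂ[A]` given by the automorphism `A ↦ μ²A`
and the element `A - A² + c`. Such an algebra embeds in the skew Laurent polynomials `ℂ[A][t, t⁻¹]`
by `B ↦ t`, `B* ↦ t⁻¹(A - A² + c)`, and these form a domain because `ℤ` has unique products.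
-/

section SkewMonoidAlgebra

open SkewMonoidAlgebra

variable {R G : Type*}

theorem coeff_mul_mul_of_uniqueMul [Semiring R] [Mul G] [SMulZeroClass G R]
    {f g : SkewMonoidAlgebra R G} {a b : G} (h : UniqueMul f.support g.support a b) :
    (f * g).coeff (a * b) = f.coeff a * a • g.coeff b := by
  classical
  simp_rw [coeff_mul, sum_def', ← Finset.sum_product']
  refine (Finset.sum_eq_single (a, b) (fun p hp hne => if_neg fun he => hne ?_)
    fun hab => ?_).trans (if_pos rfl)
  · rw [Finset.mem_product] at hp
    exact Prod.ext_iff.mpr (h hp.1 hp.2 he)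
  · rw [Finset.mem_product, not_and_or, notMem_support_iff, notMem_support_iff] at hab
    obtain ha | hb := hab
    · rw [ha, zero_mul, ite_self]
    · rw [hb, smul_zero, mul_zero, ite_self]

theorem noZeroDivisors_skewMonoidAlgebra [Semiring R] [NoZeroDivisors R] [Group G] [UniqueProds G]
    [MulSemiringAction G R] : NoZeroDivisors (SkewMonoidAlgebra R G) where
  eq_zero_or_eq_zero_of_mul_eq_zero {f g} hfg := by
    contrapose! hfg
    simp only [ne_eq, ← support_eq_empty, ← Finset.nonempty_iff_ne_empty] at hfg ⊢
    obtain ⟨a, ha, b, hb, hab⟩ := UniqueProds.uniqueMul_of_nonempty hfg.1 hfg.2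
    refine ⟨a * b, ?_⟩
    rw [mem_support_iff] at ha hb ⊢
    rw [coeff_mul_mul_of_uniqueMul hab]
    exact mul_ne_zero ha ((smul_ne_zero_iff_ne a).mpr hb)

/-- The inclusion of the coefficient algebra into a skew monoid algebra, as an algebra
homomorphism. -/
def singleOneAlgHom (K R G : Type*) [CommSemiring K] [Semiring R] [Algebra K R] [Monoid G]
    [MulSemiringAction G R] [SMulCommClass G K R] : R →ₐ[K] SkewMonoidAlgebra R G :=
  { singleOneRingHom with commutes' := fun _ => rfl }

theorem singleOneAlgHom_apply (K : Type*) [CommSemiring K] [Semiring R] [Algebra K R] [Monoid G]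
    [MulSemiringAction G R] [SMulCommClass G K R] (r : R) :
    singleOneAlgHom K R G r = single 1 r := rfl

end SkewMonoidAlgebra

local notation "τ" => Multiplicative.ofAdd (1 : ℤ)

section GeneralizedWeylAlgebra

open SkewMonoidAlgebra

/-- `S` is a generalized Weyl algebra `R(σ, a)` in the sense of Bavula: it is generated by the image
of `R` and two elements `x`, `y` with `x r = σ(r) x`, `y r = σ⁻¹(r) y`, `y x = a` and `x y = σ(a)`.
The automorphism `σ` is the action on `R` of the generator of `Multiplicative ℤ`. -/
structure IsGeneralizedWeylAlgebra {R S : Type*} [Ring R] [Ring S]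
    [MulSemiringAction (Multiplicative ℤ) R] (ι : R →+* S) (a : R) (x y : S) : Prop where
  semiconjBy_x (r : R) : SemiconjBy x (ι r) (ι (τ • r))
  semiconjBy_y (r : R) : SemiconjBy y (ι r) (ι (τ⁻¹ • r))
  y_mul_x : y * x = ι a
  x_mul_y : x * y = ι (τ • a)
  closure_eq_top : Subring.closure (Set.range ι ∪ {x, y}) = ⊤

/-- The standard monomial of degree `n` in a generalized Weyl algebra: `x ^ n` for `0 ≤ n` and
`y ^ (-n)` for `n < 0`. -/
def weylMonomial {S : Type*} [Monoid S] (x y : S) : ℤ → S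
  | .ofNat n => x ^ n
  | .negSucc n => y ^ (n + 1)

section Monoid

variable {S : Type*} [Monoid S] (x y : S)

theorem weylMonomial_zero : weylMonomial x y 0 = 1 := pow_zero x

theorem weylMonomial_one : weylMonomial x y 1 = x := pow_one x

theorem weylMonomial_neg_one : weylMonomial x y (-1) = y := pow_one y

theorem weylMonomial_natCast (n : ℕ) : weylMonomial x y n = x ^ n := rfl

theorem weylMonomial_neg_natCast (n : ℕ) : weylMonomial x y (-n) = y ^ n := by
  cases n with
  | zero => rw [Nat.cast_zero, neg_zero, weylMonomial_zero, pow_zero]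
  | succ n => rfl

end Monoid

section Ring

variable {R S : Type*} [Ring R] [Ring S] (ι : R →+* S) (x y : S)

/-- The map `∑ rₙ tⁿ ↦ ∑ ι(rₙ) bₙ`, where `bₙ` is the standard monomial of degree `n`. It is
additive but in general not multiplicative. -/
def weylNormalForm : SkewMonoidAlgebra R (Multiplicative ℤ) →+ S :=
  liftNC (ι : R →+ S) fun n => weylMonomial x y n.toAdd

theorem weylNormalForm_single (n : Multiplicative ℤ) (r : R) :
    weylNormalForm ι x y (single n r) = ι r * weylMonomial x y n.toAdd :=
  liftNC_single _ _ _ _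

end Ring

namespace IsGeneralizedWeylAlgebra

variable {R S : Type*} [Ring R] [Ring S] [MulSemiringAction (Multiplicative ℤ) R]
  {ι : R →+* S} {a : R} {x y : S}

theorem exists_x_mul_weylMonomial (h : IsGeneralizedWeylAlgebra ι a x y) (n : ℤ) :
    ∃ r, x * weylMonomial x y n = ι r * weylMonomial x y (n + 1) := by
  obtain ⟨n, rfl | rfl⟩ := n.eq_nat_or_neg
  · refine ⟨1, ?_⟩
    rw [← Nat.cast_succ, weylMonomial_natCast, weylMonomial_natCast, pow_succ', map_one, one_mul]
  · cases n with
    | zero =>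
      refine ⟨1, ?_⟩
      rw [Nat.cast_zero, neg_zero, weylMonomial_zero, zero_add,
        weylMonomial_one, map_one, one_mul, mul_one]
    | succ n =>
      refine ⟨τ • a, ?_⟩
      rw [show -((n + 1 : ℕ) : ℤ) + 1 = -n by push_cast; ring, weylMonomial_neg_natCast,
        weylMonomial_neg_natCast, pow_succ', ← mul_assoc, h.x_mul_y]

theorem exists_y_mul_weylMonomial (h : IsGeneralizedWeylAlgebra ι a x y) (n : ℤ) :
    ∃ r, y * weylMonomial x y n = ι r * weylMonomial x y (n - 1) := by
  obtain ⟨n, rfl | rfl⟩ := n.eq_nat_or_neg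
  · cases n with
    | zero =>
      refine ⟨1, ?_⟩
      rw [Nat.cast_zero, weylMonomial_zero, zero_sub, weylMonomial_neg_one, map_one,
        one_mul, mul_one]
    | succ n =>
      refine ⟨a, ?_⟩
      rw [Nat.cast_succ, add_sub_cancel_right, ← Nat.cast_succ, weylMonomial_natCast,
        weylMonomial_natCast, pow_succ', ← mul_assoc, h.y_mul_x]
  · refine ⟨1, ?_⟩
    rw [show -(n : ℤ) - 1 = -(n + 1 : ℕ) by push_cast; ring, weylMonomial_neg_natCast,
      weylMonomial_neg_natCast, pow_succ', map_one, one_mul]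

theorem mul_mem_range_weylNormalForm (h : IsGeneralizedWeylAlgebra ι a x y) (s : S) {w : S}
    (hw : w ∈ (weylNormalForm ι x y).range) : s * w ∈ (weylNormalForm ι x y).range := by
  have mem (r : R) (n : ℤ) : ι r * weylMonomial x y n ∈ (weylNormalForm ι x y).range :=
    ⟨single (.ofAdd n) r, weylNormalForm_single ι x y _ r⟩
  have hs : s ∈ Subring.closure (Set.range ι ∪ {x, y}) := h.closure_eq_top ▸ Subring.mem_top s
  induction hs using Subring.closure_induction generalizing w with
  | mem s hs =>
    obtain ⟨f, rfl⟩ := hw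
    induction f with
    | add f g hf hg => simpa only [map_add, mul_add] using add_mem hf hg
    | single n r =>
      rw [weylNormalForm_single]
      obtain ⟨r', rfl⟩ | rfl | rfl := hs
      · rw [← mul_assoc, ← map_mul]
        exact mem _ _
      · obtain ⟨r', hr'⟩ := h.exists_x_mul_weylMonomial n.toAdd
        rw [← mul_assoc, h.semiconjBy_x r, mul_assoc, hr', ← mul_assoc, ← map_mul]
        exact mem _ _
      · obtain ⟨r', hr'⟩ := h.exists_y_mul_weylMonomial n.toAdd
        rw [← mul_assoc, h.semiconjBy_y r, mul_assoc, hr', ← mul_assoc, ← map_mul]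
        exact mem _ _
  | zero => simpa only [zero_mul] using zero_mem _
  | one => simpa only [one_mul] using hw
  | add s t _ _ hs ht => simpa only [add_mul] using add_mem (hs hw) (ht hw)
  | neg s _ hs => simpa only [neg_mul] using neg_mem (hs hw)
  | mul s t _ _ hs ht => simpa only [mul_assoc] using hs (ht hw)

theorem weylNormalForm_surjective (h : IsGeneralizedWeylAlgebra ι a x y) :
    Function.Surjective (weylNormalForm ι x y) := fun s => by
  have one_mem : (1 : S) ∈ (weylNormalForm ι x y).range :=
    ⟨single 1 1, by rw [weylNormalForm_single, map_one, toAdd_one, weylMonomial_zero, mul_one]⟩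
  rw [← mul_one s]
  exact h.mul_mem_range_weylNormalForm s one_mem

variable [NoZeroDivisors R] [Nontrivial R] {Φ : S →+* SkewMonoidAlgebra R (Multiplicative ℤ)}

theorem exists_map_weylMonomial_eq_single (ha : a ≠ 0) (hx : Φ x = single τ 1)
    (hy : Φ y = single τ⁻¹ a) (n : ℤ) : ∃ r ≠ 0, Φ (weylMonomial x y n) = single (.ofAdd n) r := by
  obtain ⟨n, rfl | rfl⟩ := n.eq_nat_or_neg
  · refine ⟨1, one_ne_zero, ?_⟩
    induction n with
    | zero => simp [weylMonomial_zero]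
    | succ n ih =>
      rw [weylMonomial_natCast] at ih ⊢
      rw [pow_succ, map_mul, ih, hx, single_mul_single, smul_one, mul_one]
      rfl
  · induction n with
    | zero => exact ⟨1, one_ne_zero, by simp [weylMonomial_zero]⟩
    | succ n ih =>
      obtain ⟨r, hr, ih⟩ := ih
      rw [weylMonomial_neg_natCast] at ih ⊢
      refine ⟨r * Multiplicative.ofAdd (-n : ℤ) • a,
        mul_ne_zero hr ((smul_ne_zero_iff_ne _).mpr ha), ?_⟩
      rw [pow_succ, map_mul, ih, hy, single_mul_single, ← ofAdd_neg, ← ofAdd_add]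
      congr 2
      push_cast
      ring

theorem injective_of_map_eq_single (h : IsGeneralizedWeylAlgebra ι a x y) (ha : a ≠ 0)
    (hι : ∀ r, Φ (ι r) = single 1 r) (hx : Φ x = single τ 1) (hy : Φ y = single τ⁻¹ a) :
    Function.Injective Φ := by
  choose c hc hΦ using exists_map_weylMonomial_eq_single ha hx hy
  have coeff_map_weylNormalForm (f) (n : Multiplicative ℤ) :
      (Φ (weylNormalForm ι x y f)).coeff n = f.coeff n * c n.toAdd := by
    induction f with
    | add f g hf hg => simp only [map_add, coeff_add, Finsupp.add_apply, add_mul, hf, hg]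
    | single m r =>
      rw [weylNormalForm_single, map_mul, hι, hΦ, single_mul_single, one_mul, one_smul, ofAdd_toAdd]
      obtain rfl | hmn := eq_or_ne m n
      · simp
      · simp [Finsupp.single_eq_of_ne' hmn]
  refine (injective_iff_map_eq_zero Φ).mpr fun s hs => ?_
  obtain ⟨f, rfl⟩ := h.weylNormalForm_surjective s
  suffices f = 0 by rw [this, map_zero]
  ext n
  have := coeff_map_weylNormalForm f n
  rw [hs] at this
  simpa [hc] using this.symm

theorem noZeroDivisors_of_map_eq_single (h : IsGeneralizedWeylAlgebra ι a x y) (ha : a ≠ 0)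
    (hι : ∀ r, Φ (ι r) = single 1 r) (hx : Φ x = single τ 1) (hy : Φ y = single τ⁻¹ a) :
    NoZeroDivisors S :=
  have := noZeroDivisors_skewMonoidAlgebra (R := R) (G := Multiplicative ℤ)
  (h.injective_of_map_eq_single ha hι hx hy).noZeroDivisors Φ (map_zero Φ) (map_mul Φ)

end IsGeneralizedWeylAlgebra

end GeneralizedWeylAlgebra

section PodlesSphere

open Polynomial SkewMonoidAlgebra

theorem semiconjBy_aeval {K M A : Type*} [CommSemiring K] [Semiring A] [Algebra K A] [Monoid M]
    [MulSemiringAction M K[X]] [SMulCommClass M K K[X]] {g : M} {a b : A}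
    (h : SemiconjBy b a (aeval a (g • (X : K[X])))) (f : K[X]) :
    SemiconjBy b (aeval a f) (aeval a (g • f)) := by
  induction f using Polynomial.induction_on with
  | C k =>
    rw [← algebraMap_eq, smul_algebraMap, AlgHom.commutes]
    exact (Algebra.commutes k b).symm
  | add f f' hf hf' =>
    rw [map_add, smul_add, map_add]
    exact hf.add_right hf'
  | monomial n k ih =>
    rw [pow_succ, ← mul_assoc, smul_mul', map_mul, map_mul _ (g • _), aeval_X]
    exact ih.mul_right h

/-- The polynomial `X - X² + c`, whose value at `A` is `B*B` in the Podleś sphere. -/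
def podlesPoly (c : ℝ) : ℂ[X] := X - X * X + C (c : ℂ)

theorem podlesPoly_ne_zero (c : ℝ) : podlesPoly c ≠ 0 := fun h => by
  have := congrArg (fun f : ℂ[X] => f.coeff 1) h
  simp [podlesPoly, coeff_X] at this

theorem pb_mul_pa (μ c : ℝ) : pb μ c * pa μ c = ((μ ^ 2 : ℝ) : ℂ) • (pa μ c * pb μ c) := by
  simpa only [pa, pb, map_mul, map_smul] using
    RingQuot.mkAlgHom_rel ℂ (RelP.rba (μ := μ) (c := c))

theorem pa_mul_pb' (μ c : ℝ) : pa μ c * pb' μ c = ((μ ^ 2 : ℝ) : ℂ) • (pb' μ c * pa μ c) := by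
  simpa only [pa, pb', map_mul, map_smul] using
    RingQuot.mkAlgHom_rel ℂ (RelP.rab' (μ := μ) (c := c))

theorem pb'_mul_pb (μ c : ℝ) :
    pb' μ c * pb μ c = pa μ c - pa μ c * pa μ c + (c : ℂ) • 1 := by
  simpa only [pa, pb, pb', map_mul, map_smul, map_add, map_sub, map_one] using
    RingQuot.mkAlgHom_rel ℂ (RelP.rb'b (μ := μ) (c := c))

theorem pb_mul_pb' (μ c : ℝ) :
    pb μ c * pb' μ c = ((μ ^ 2 : ℝ) : ℂ) • pa μ c - ((μ ^ 4 : ℝ) : ℂ) • (pa μ c * pa μ c) +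
      (c : ℂ) • 1 := by
  simpa only [pa, pb, pb', map_mul, map_smul, map_add, map_sub, map_one] using
    RingQuot.mkAlgHom_rel ℂ (RelP.rbb' (μ := μ) (c := c))

theorem adjoin_eq_top_OP (μ c : ℝ) : Algebra.adjoin ℂ {pa μ c, pb μ c, pb' μ c} = ⊤ := by
  have image_ι : ({pa μ c, pb μ c, pb' μ c} : Set (OP μ c)) =
      RingQuot.mkAlgHom ℂ (RelP μ c) '' Set.range (FreeAlgebra.ι ℂ) := by
    rw [← Set.range_comp]
    ext s
    simp [Fin.exists_fin_succ, pa, pb, pb', PA, PB, PB', eq_comm]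
  rw [image_ι, ← AlgHom.map_adjoin, FreeAlgebra.adjoin_range_ι, Algebra.map_top,
    AlgHom.range_eq_top]
  exact RingQuot.mkAlgHom_surjective ℂ _

theorem exists_algHom_OP {μ c : ℝ} {E : Type*} [Ring E] [Algebra ℂ E] {A B B' : E}
    (hBA : B * A = ((μ ^ 2 : ℝ) : ℂ) • (A * B)) (hAB' : A * B' = ((μ ^ 2 : ℝ) : ℂ) • (B' * A))
    (hB'B : B' * B = A - A * A + (c : ℂ) • 1)
    (hBB' : B * B' = ((μ ^ 2 : ℝ) : ℂ) • A - ((μ ^ 4 : ℝ) : ℂ) • (A * A) + (c : ℂ) • 1) :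
    ∃ φ : OP μ c →ₐ[ℂ] E, φ (pa μ c) = A ∧ φ (pb μ c) = B ∧ φ (pb' μ c) = B' := by
  have lift_rel ⦃x y⦄ (h : RelP μ c x y) :
      FreeAlgebra.lift ℂ ![A, B, B'] x = FreeAlgebra.lift ℂ ![A, B, B'] y := by
    cases h <;> simpa [PA, PB, PB', -Complex.coe_smul, -Complex.ofReal_pow]
  refine ⟨RingQuot.liftAlgHom ℂ ⟨FreeAlgebra.lift ℂ ![A, B, B'], lift_rel⟩, ?_, ?_, ?_⟩ <;>
    simp [pa, pb, pb', PA, PB, PB']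

section Action

variable [MulSemiringAction (Multiplicative ℤ) ℂ[X]] [SMulCommClass (Multiplicative ℤ) ℂ ℂ[X]]
  {μ : ℝ} (c : ℝ)

theorem smul_podlesPoly (hX : τ • (X : ℂ[X]) = ((μ ^ 2 : ℝ) : ℂ) • X) :
    τ • podlesPoly c =
      ((μ ^ 2 : ℝ) : ℂ) • X - ((μ ^ 4 : ℝ) : ℂ) • (X * X) + C (c : ℂ) := by
  rw [podlesPoly, smul_add, smul_sub, smul_mul', hX, ← algebraMap_eq, smul_algebraMap,
    smul_mul_smul_comm, ← Complex.ofReal_mul, ← pow_add]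

theorem smul_inv_smul_X (hX : τ • (X : ℂ[X]) = ((μ ^ 2 : ℝ) : ℂ) • X) :
    ((μ ^ 2 : ℝ) : ℂ) • τ⁻¹ • (X : ℂ[X]) = X := by
  rw [← smul_comm, ← hX, inv_smul_smul]

theorem isGeneralizedWeylAlgebra_OP (hμ : μ ≠ 0)
    (hX : τ • (X : ℂ[X]) = ((μ ^ 2 : ℝ) : ℂ) • X) :
    IsGeneralizedWeylAlgebra (aeval (pa μ c) : ℂ[X] →ₐ[ℂ] OP μ c).toRingHom (podlesPoly c)
      (pb μ c) (pb' μ c) where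
  semiconjBy_x := semiconjBy_aeval <| by
    rw [hX, map_smul, aeval_X, SemiconjBy, smul_mul_assoc, pb_mul_pa]
  semiconjBy_y := semiconjBy_aeval <| by
    have hμ2 : ((μ ^ 2 : ℝ) : ℂ) ≠ 0 := Complex.ofReal_ne_zero.mpr (pow_ne_zero 2 hμ)
    rw [eq_inv_smul_iff₀ hμ2 |>.mpr (smul_inv_smul_X hX), map_smul, aeval_X, SemiconjBy,
      smul_mul_assoc, pa_mul_pb', inv_smul_smul₀ hμ2]
  y_mul_x := by simp [podlesPoly, pb'_mul_pb, Algebra.smul_def]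
  x_mul_y := by simp [smul_podlesPoly c hX, pb_mul_pb', Algebra.smul_def]
  closure_eq_top := by
    refine top_le_iff.mp fun s _ => Subring.closure_mono ?_
      (Algebra.mem_adjoin_iff.mp (adjoin_eq_top_OP μ c ▸ Algebra.mem_top))
    rintro _ (⟨k, rfl⟩ | rfl | hb)
    · exact .inl ⟨C k, aeval_C _ k⟩
    · exact .inl ⟨X, aeval_X _⟩
    · exact .inr hb

theorem exists_algHom_OP_skewMonoidAlgebra (hX : τ • (X : ℂ[X]) = ((μ ^ 2 : ℝ) : ℂ) • X) :
    ∃ Φ : OP μ c →ₐ[ℂ] SkewMonoidAlgebra ℂ[X] (Multiplicative ℤ),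
      (∀ f : ℂ[X], Φ (aeval (pa μ c) f) = single 1 f) ∧ Φ (pb μ c) = single τ 1 ∧
        Φ (pb' μ c) = single τ⁻¹ (podlesPoly c) := by
  let ι := singleOneAlgHom ℂ ℂ[X] (Multiplicative ℤ)
  have hBA : single τ 1 * ι X = ((μ ^ 2 : ℝ) : ℂ) • (ι X * single τ 1) := by
    simp [ι, singleOneAlgHom_apply, single_mul_single, hX, ← smul_single]
  have hAB' : ι X * single τ⁻¹ (podlesPoly c) =
      ((μ ^ 2 : ℝ) : ℂ) • (single τ⁻¹ (podlesPoly c) * ι X) := by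
    rw [singleOneAlgHom_apply, single_mul_single, single_mul_single, smul_single,
      ← mul_smul_comm, smul_inv_smul_X hX, one_mul, mul_one, one_smul, mul_comm]
  have hB'B : single τ⁻¹ (podlesPoly c) * single τ 1 = ι X - ι X * ι X + (c : ℂ) • 1 := calc
    _ = ι (podlesPoly c) := by simp [ι, singleOneAlgHom_apply, single_mul_single]
    _ = _ := by
      simp only [podlesPoly, ← algebraMap_eq, Algebra.algebraMap_eq_smul_one, map_add, map_sub,
        map_mul, map_smul, map_one]
  have hBB' : single τ 1 * single τ⁻¹ (podlesPoly c) =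
      ((μ ^ 2 : ℝ) : ℂ) • ι X - ((μ ^ 4 : ℝ) : ℂ) • (ι X * ι X) + (c : ℂ) • 1 := calc
    _ = ι (τ • podlesPoly c) := by simp [ι, singleOneAlgHom_apply, single_mul_single]
    _ = _ := by
      simp only [smul_podlesPoly c hX, ← algebraMap_eq, Algebra.algebraMap_eq_smul_one, map_add,
        map_sub, map_mul, map_smul, map_one]
  obtain ⟨Φ, hA, hB, hB'⟩ := exists_algHom_OP hBA hAB' hB'B hBB'
  have hΦ : Φ.comp (aeval (pa μ c)) = ι := algHom_ext (by simpa using hA)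
  exact ⟨Φ, AlgHom.congr_fun hΦ, hB, hB'⟩

end Action

theorem noZeroDivisors_OP {μ : ℝ} (hμ : μ ≠ 0) (c : ℝ) : NoZeroDivisors (OP μ c) := by
  have hμ2 : ((μ ^ 2 : ℝ) : ℂ) ≠ 0 := Complex.ofReal_ne_zero.mpr (pow_ne_zero 2 hμ)
  let _ := invertibleOfNonzero hμ2
  let σ : ℂ[X] ≃ₐ[ℂ] ℂ[X] := algEquivCMulXAddC ((μ ^ 2 : ℝ) : ℂ) 0
  let _ := MulSemiringAction.compHom ℂ[X] (zpowersHom (ℂ[X] ≃ₐ[ℂ] ℂ[X]) σ)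
  have τ_smul (f : ℂ[X]) : τ • f = σ f := by
    change zpowersHom (ℂ[X] ≃ₐ[ℂ] ℂ[X]) σ τ f = σ f
    rw [zpowersHom_apply, toAdd_ofAdd, zpow_one]
  have : SMulCommClass (Multiplicative ℤ) ℂ ℂ[X] :=
    ⟨fun n k f => map_smul (zpowersHom (ℂ[X] ≃ₐ[ℂ] ℂ[X]) σ n) k f⟩
  have hX : τ • (X : ℂ[X]) = ((μ ^ 2 : ℝ) : ℂ) • X := by
    simp [τ_smul, σ, smul_eq_C_mul]
  obtain ⟨Φ, hι, hx, hy⟩ := exists_algHom_OP_skewMonoidAlgebra c hX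
  exact (isGeneralizedWeylAlgebra_OP c hμ hX).noZeroDivisors_of_map_eq_single
    (Φ := Φ.toRingHom) (podlesPoly_ne_zero c) hι hx hy

end PodlesSphere

section QuantumDiscs

/-- The relation `x*x - s xx* = (1 - s) 1` of the quantum disc with parameter `s`, for a pair
`x`, `y` standing for `x`, `x*`. -/
def IsQuantumDisc {E : Type*} [Ring E] [Algebra ℂ E] (s : ℂ) (x y : E) : Prop :=
  y * x = s • (x * y) + (1 - s) • 1

theorem exists_isQuantumDisc_mul_ne_one (s : ℂ) :
    ∃ x y : Module.End ℂ (ℕ → ℂ), IsQuantumDisc s x y ∧ x * y ≠ 1 := by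
  refine ⟨LinearMap.mulLeft ℂ (fun n => 1 - s ^ n) ∘ₗ LinearMap.funLeft ℂ ℂ Nat.pred,
    LinearMap.funLeft ℂ ℂ Nat.succ, ?_, fun h => ?_⟩
  · refine LinearMap.ext fun v => funext fun n => ?_
    cases n with
    | zero => simp
    | succ n =>
      change (1 - s ^ (n + 1 + 1)) * v (n + 1) =
        s * ((1 - s ^ (n + 1)) * v (n + 1)) + (1 - s) * v (n + 1)
      ring
  · have := congrFun (LinearMap.congr_fun h 1) 0
    simp at this

theorem exists_algHom_OS2 {p q : ℝ} {E : Type*} [Ring E] [Algebra ℂ E] {a x y : E}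
    (hyx : y * x = (q : ℂ) • (x * y) + ((p - q : ℝ) : ℂ) • a + ((1 - p : ℝ) : ℂ) • 1)
    (hax : a * x = (p : ℂ) • (x * a) + ((1 - p : ℝ) : ℂ) • x)
    (hya : y * a = (p : ℂ) • (a * y) + ((1 - p : ℝ) : ℂ) • y)
    (hl : (1 - a) * (x * y - a) = 0) (hr : (x * y - a) * (1 - a) = 0) :
    ∃ φ : OS2 p q →ₐ[ℂ] E, φ (f0 p q) = a ∧ φ (f1 p q) = x ∧ φ (f1' p q) = y := by
  have lift_rel ⦃u v⦄ (h : RelS2 p q u v) :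
      FreeAlgebra.lift ℂ ![a, x, y] u = FreeAlgebra.lift ℂ ![a, x, y] v := by
    cases h <;> simpa [F0, F1, F1', -Complex.coe_smul, -Complex.ofReal_sub]
  refine ⟨RingQuot.liftAlgHom ℂ ⟨FreeAlgebra.lift ℂ ![a, x, y], lift_rel⟩, ?_, ?_, ?_⟩ <;>
    simp [f0, f1, f1', F0, F1, F1']

variable {p q : ℝ} {E : Type*} [Ring E] [Algebra ℂ E] {x y : E}

theorem IsQuantumDisc.exists_algHom_f0_eq_mul (h : IsQuantumDisc (p : ℂ) x y) :
    ∃ φ : OS2 p q →ₐ[ℂ] E, φ (f0 p q) = x * y ∧ φ (f1 p q) = x ∧ φ (f1' p q) = y := by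
  have h' : y * x = (p : ℂ) • (x * y) + (1 - p : ℂ) • 1 := h
  refine exists_algHom_OS2 ?_ ?_ ?_ (by rw [sub_self, mul_zero]) (by rw [sub_self, zero_mul])
  · rw [h', ← add_smul]
    push_cast
    rw [add_sub_cancel]
  · rw [mul_assoc, h', mul_add, mul_smul_comm, mul_smul_comm, mul_one]
    push_cast
    rfl
  · rw [← mul_assoc, h', add_mul, smul_mul_assoc, smul_mul_assoc, one_mul]
    push_cast
    rfl

theorem IsQuantumDisc.exists_algHom_f0_eq_one (h : IsQuantumDisc (q : ℂ) x y) :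
    ∃ φ : OS2 p q →ₐ[ℂ] E, φ (f0 p q) = 1 ∧ φ (f1 p q) = x ∧ φ (f1' p q) = y := by
  have h' : y * x = (q : ℂ) • (x * y) + (1 - q : ℂ) • 1 := h
  refine exists_algHom_OS2 ?_ ?_ ?_ (by rw [sub_self, zero_mul]) (by rw [sub_self, mul_zero])
  · rw [h', add_assoc, ← add_smul]
    push_cast
    rw [sub_add_sub_cancel']
  · rw [one_mul, mul_one, ← add_smul]
    push_cast
    rw [add_sub_cancel, one_smul]
  · rw [one_mul, mul_one, ← add_smul]
    push_cast
    rw [add_sub_cancel, one_smul]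

theorem one_sub_f0_ne_zero (p q : ℝ) : 1 - f0 p q ≠ 0 := fun h => by
  obtain ⟨x, y, hxy, hne⟩ := exists_isQuantumDisc_mul_ne_one p
  obtain ⟨φ, hφ, -⟩ := hxy.exists_algHom_f0_eq_mul (q := q)
  exact hne (by rw [← hφ, ← sub_eq_zero.mp h, map_one])

theorem f1_mul_f1'_sub_f0_ne_zero (p q : ℝ) : f1 p q * f1' p q - f0 p q ≠ 0 := fun h => by
  obtain ⟨x, y, hxy, hne⟩ := exists_isQuantumDisc_mul_ne_one q
  obtain ⟨φ, hφ₀, hφ₁, hφ₁'⟩ := hxy.exists_algHom_f0_eq_one (p := p)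
  exact hne (by rw [← hφ₁, ← hφ₁', ← map_mul, sub_eq_zero.mp h, hφ₀])

theorem one_sub_f0_mul_eq_zero (p q : ℝ) :
    (1 - f0 p q) * (f1 p q * f1' p q - f0 p q) = 0 := by
  simpa only [f0, f1, f1', map_mul, map_sub, map_one, map_zero] using
    RingQuot.mkAlgHom_rel ℂ (RelS2.r3 (p := p) (q := q))

end QuantumDiscs

theorem stmt18_general (p q : ℝ) {μ : ℝ} (hμ : μ ≠ 0) (c : ℝ) (φ : OS2 p q →+* OP μ c) :
    ¬ Function.Injective φ := fun hφ => by
  have := noZeroDivisors_OP hμ c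
  have := hφ.noZeroDivisors φ (map_zero φ) (map_mul φ)
  exact (mul_ne_zero (one_sub_f0_ne_zero p q) (f1_mul_f1'_sub_f0_ne_zero p q))
    (one_sub_f0_mul_eq_zero p q)

/-- for all `0 < p,q,μ < 1` and `c > 0` there is no `*`-algebra isomorphism
between `O(S²_pq)` and the Podleś sphere algebra `O(S²_μc)`: there is no triple consisting
of the two (canonical) involutions and a unital ℂ-algebra isomorphism intertwining them. -/
theorem stmt18 (p q μ c : ℝ) (hp0 : 0 < p) (hp1 : p < 1) (hq0 : 0 < q) (hq1 : q < 1)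
    (hμ0 : 0 < μ) (hμ1 : μ < 1) (hc : 0 < c) :
    ¬ ∃ (φ : OS2 p q ≃ₐ[ℂ] OP μ c)
        (st₁ : OS2 p q → OS2 p q) (st₂ : OP μ c → OP μ c),
      (∀ x y, st₁ (x + y) = st₁ x + st₁ y) ∧
      (∀ (z : ℂ) x, st₁ (z • x) = (starRingEnd ℂ) z • st₁ x) ∧
      (∀ x y, st₁ (x * y) = st₁ y * st₁ x) ∧
      (∀ x, st₁ (st₁ x) = x) ∧
      st₁ (f0 p q) = f0 p q ∧ st₁ (f1 p q) = f1' p q ∧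
      (∀ x y, st₂ (x + y) = st₂ x + st₂ y) ∧
      (∀ (z : ℂ) x, st₂ (z • x) = (starRingEnd ℂ) z • st₂ x) ∧
      (∀ x y, st₂ (x * y) = st₂ y * st₂ x) ∧
      (∀ x, st₂ (st₂ x) = x) ∧
      st₂ (pa μ c) = pa μ c ∧ st₂ (pb μ c) = pb' μ c ∧
      (∀ x, φ (st₁ x) = st₂ (φ x)) := by
  rintro ⟨φ, -⟩
  exact stmt18_general p q hμ0.ne' c (φ : OS2 p q →+* OP μ c) φ.injective

end S2comparison
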